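/- arXiv:1001.2638 — 3 statements merged into one kernel-verified Lean document; each statement's English description precedes it below -/
import Mathlib

section
/- Let p be a prime with p ≡ 3 (mod 4) and let k be an integer not divisible by p. Then the Gaussian sum S(k,p) = Σ_{j=0}^{p-1} e^{2πi j² k / p} equals i · (k/p) · √p, where (k/p) is the Legendre symbol and i = √(-1). -/
open Complex

/-! The sum is evaluated at `k = 1` by comparing two cusps of the Jacobi theta function
`θ(τ) = ∑ exp(π i n² τ)`. By Poisson summation on each residue class mod `a`, `√(-iu) θ(b/a + u)`
tends to the mean of `exp(π i r² b/a)` over `r < a` as `u` approaches `0` inside horodiscs. The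
functional equation `√(-iτ) θ(τ) = θ(-1/τ)` exchanges the cusps `b/a` and `-a/b`, and so relates a
Gauss sum of `a` terms to one of `b` terms; for `b = 2` the latter is `1 + (-i)^a`. A general `k`
reduces to `k = 1` because the sum is also the Gauss sum of the quadratic character. -/

open Filter Topology
open scoped Real

lemma ofReal_mul_cpow {x : ℝ} (hx : 0 ≤ x) (z s : ℂ) :
    ((x : ℂ) * z) ^ s = (x : ℂ) ^ s * z ^ s := by
  rcases eq_or_ne s 0 with rfl | hs
  · simp
  rcases hx.eq_or_lt with rfl | hx
  · simp [hs]
  rcases eq_or_ne z 0 with rfl | hz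
  · simp [hs]
  have hx' : (x : ℂ) ≠ 0 := ofReal_ne_zero.2 hx.ne'
  rw [cpow_def_of_ne_zero (mul_ne_zero hx' hz), cpow_def_of_ne_zero hx', cpow_def_of_ne_zero hz,
    log_ofReal_mul hx hz, ofReal_log hx.le, add_mul, exp_add]

lemma im_neg_one_div_pos {z : ℂ} : 0 < (-1 / z).im ↔ 0 < z.im := by
  rcases eq_or_ne z 0 with rfl | hz
  · simp
  rw [neg_div, neg_im, one_div, inv_im, neg_div, neg_neg,
    div_pos_iff_of_pos_right (normSq_pos.2 hz)]

lemma tsum_int_eq_sum_range_tsum {G : Type*} [AddCommGroup G] [UniformSpace G]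
    [IsUniformAddGroup G] [CompleteSpace G] [T2Space G] {f : ℤ → G} (hf : Summable f)
    (N : ℕ) [NeZero N] :
    ∑' n, f n = ∑ r ∈ Finset.range N, ∑' m : ℤ, f (m * N + r) := by
  let e : Fin N × ℤ ≃ ℤ := (Equiv.prodComm _ _).trans (Int.divModEquiv N).symm
  have hprod : ∑' c, f (e c) = ∑' (r : Fin N) (m : ℤ), f (m * N + r) :=
    (e.summable_iff.2 hf).tsum_prod
  rw [← e.tsum_eq f, hprod, tsum_fintype, Finset.sum_range]

lemma tendsto_jacobiTheta₂_comap_im_atTop (z : ℂ) :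
    Tendsto (jacobiTheta₂ z) (comap im atTop) (𝓝 1) := by
  have him : Tendsto im (comap im atTop) atTop := tendsto_comap
  have hsum : ∑' n : ℤ, (if n = 0 then (1 : ℂ) else 0) = 1 := tsum_ite_eq 0 (fun _ => (1 : ℂ))
  rw [← hsum]
  refine tendsto_tsum_of_dominated_convergence
    ((summable_jacobiTheta₂_term_iff z I).2 (by simp)).norm (fun n => ?_) ?_
  · split_ifs with hn
    · simpa [hn, jacobiTheta₂_term] using tendsto_const_nhds
    · have hneg : -π * (n : ℝ) ^ 2 < 0 :=
        mul_neg_of_neg_of_pos (neg_lt_zero.2 Real.pi_pos) (by positivity)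
      rw [tendsto_zero_iff_norm_tendsto_zero]
      simp only [norm_jacobiTheta₂_term]
      exact Real.tendsto_exp_atBot.comp
        (tendsto_atBot_add_const_right _ _ (him.const_mul_atTop_of_neg hneg))
  · filter_upwards [him.eventually_ge_atTop 1] with τ hτ n
    simp only [norm_jacobiTheta₂_term, I_im, Real.exp_le_exp]
    nlinarith [mul_nonneg Real.pi_pos.le (sq_nonneg (n : ℝ))]

lemma cpow_half_mul_tsum_exp_arithProgression (N : ℕ) [NeZero N] (r : ℕ) {τ : ℂ} (hτ : τ ≠ 0) :
    (-I * τ) ^ (1 / 2 : ℂ) * ∑' m : ℤ, cexp (π * I * (m * N + r) ^ 2 * τ) =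
      1 / N * jacobiTheta₂ (r / N) (-1 / (N ^ 2 * τ)) := by
  have hN : (N : ℂ) ≠ 0 := NeZero.ne _
  have hcpow : (-I * (N ^ 2 * τ)) ^ (1 / 2 : ℂ) = N * (-I * τ) ^ (1 / 2 : ℂ) := by
    have h := ofReal_mul_cpow (sq_nonneg (N : ℝ)) (-I * τ) (1 / 2)
    rw [mul_left_comm]
    push_cast at h
    rw [h, one_div, sq_cpow_two_inv (by simpa using NeZero.pos N)]
  have hterm (m : ℤ) : cexp (π * I * (m * N + r) ^ 2 * τ) =
      cexp (π * I * r ^ 2 * τ) * jacobiTheta₂_term m (N * r * τ) (N ^ 2 * τ) := by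
    rw [jacobiTheta₂_term, ← exp_add]
    ring_nf
  have harg : (N * r * τ) / (N ^ 2 * τ) = r / N := by field_simp
  have hexp : cexp (π * I * r ^ 2 * τ) * cexp (-π * I * (N * r * τ) ^ 2 / (N ^ 2 * τ)) = 1 := by
    rw [← exp_add, exp_eq_one_iff]
    exact ⟨0, by field_simp; simp⟩
  have hne : (-I * τ) ^ (1 / 2 : ℂ) ≠ 0 := by simp [cpow_eq_zero_iff, hτ]
  calc
    _ = (-I * τ) ^ (1 / 2 : ℂ) *
        (cexp (π * I * r ^ 2 * τ) * jacobiTheta₂ (N * r * τ) (N ^ 2 * τ)) := by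
      simp_rw [hterm, tsum_mul_left, jacobiTheta₂]
    _ = (-I * τ) ^ (1 / 2 : ℂ) / (N * (-I * τ) ^ (1 / 2 : ℂ)) *
        (cexp (π * I * r ^ 2 * τ) * cexp (-π * I * (N * r * τ) ^ 2 / (N ^ 2 * τ))) *
        jacobiTheta₂ (r / N) (-1 / (N ^ 2 * τ)) := by
      rw [jacobiTheta₂_functional_equation, hcpow, harg]
      ring
    _ = _ := by rw [hexp, mul_one, div_mul_cancel_right₀ hne, one_div]

/-- The filter at `0` generated by the horodiscs `Im (-1 / u) > C`, the discs in the upper half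
plane tangent to the real axis at `0`; it describes the approach of a modular form to that cusp. -/
noncomputable def horodiscNhdsZero : Filter ℂ :=
  comap (fun u => (-1 / u).im) atTop

lemma tendsto_cpow_half_mul_tsum_exp_arithProgression (N : ℕ) [NeZero N] (r : ℕ) :
    Tendsto (fun τ : ℂ => (-I * τ) ^ (1 / 2 : ℂ) * ∑' m : ℤ, cexp (π * I * (m * N + r) ^ 2 * τ))
      horodiscNhdsZero (𝓝 (1 / N)) := by
  have him : Tendsto (fun τ : ℂ => (-1 / τ).im) horodiscNhdsZero atTop :=
    tendsto_comap
  have harg : Tendsto (fun τ : ℂ => -1 / ((N : ℂ) ^ 2 * τ)) horodiscNhdsZero (comap im atTop) := by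
    have hN : (0 : ℝ) < ((N : ℝ) ^ 2)⁻¹ := by have := NeZero.pos N; positivity
    refine tendsto_comap_iff.2 ((him.const_mul_atTop hN).congr fun τ => ?_)
    rw [← im_ofReal_mul, Function.comp_apply]
    congr 1
    push_cast
    ring
  have hlim := ((tendsto_jacobiTheta₂_comap_im_atTop (r / N)).comp harg).const_mul (1 / (N : ℂ))
  rw [mul_one] at hlim
  refine hlim.congr' ?_
  filter_upwards [him.eventually_gt_atTop 0] with τ hτ
  have hτ0 : τ ≠ 0 := by rintro rfl; simp at hτ
  exact (cpow_half_mul_tsum_exp_arithProgression N r hτ0).symm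

lemma cpow_half_mul_jacobiTheta {τ : ℂ} (hτ : τ ≠ 0) :
    (-I * τ) ^ (1 / 2 : ℂ) * jacobiTheta τ = jacobiTheta (-1 / τ) := by
  have hne : (-I * τ) ^ (1 / 2 : ℂ) ≠ 0 := by simp [cpow_eq_zero_iff, hτ]
  have hfun := jacobiTheta₂_functional_equation 0 τ
  rw [zero_pow two_ne_zero, mul_zero, zero_div, exp_zero, mul_one] at hfun
  rw [jacobiTheta_eq_jacobiTheta₂, jacobiTheta_eq_jacobiTheta₂, hfun, ← mul_assoc,
    mul_one_div_cancel hne, one_mul]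

/-- The quadratic Gauss sum `∑ exp(π i n² b / a)` over `0 ≤ n < a`. With `π` in place of `2π` it is
the natural object for reciprocity, but its terms depend only on `n` mod `a` when `a * b` is even;
the classical sum `S(k, p)` is `quadGaussSum (2 * k) p`. -/
noncomputable def quadGaussSum (b : ℤ) (a : ℕ) : ℂ :=
  ∑ n ∈ Finset.range a, cexp (π * I * n ^ 2 * (b / a))

lemma jacobiTheta_div_add {a : ℕ} [NeZero a] {b : ℤ} (hab : Even (a * b)) {u : ℂ}
    (hu : 0 < u.im) :
    jacobiTheta (b / a + u) = ∑ r ∈ Finset.range a,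
      cexp (π * I * r ^ 2 * (b / a)) * ∑' m : ℤ, cexp (π * I * (m * a + r) ^ 2 * u) := by
  have ha : (a : ℂ) ≠ 0 := NeZero.ne _
  obtain ⟨c, hc⟩ := hab
  have hc' : (a : ℂ) * b = c + c := mod_cast hc
  have hterm (m : ℤ) (r : ℕ) : cexp (π * I * ((m * a + r : ℤ) : ℂ) ^ 2 * (b / a + u)) =
      cexp (π * I * r ^ 2 * (b / a)) * cexp (π * I * (m * a + r) ^ 2 * u) := by
    rw [← exp_add, exp_eq_exp_iff_exists_int]
    refine ⟨m ^ 2 * c + m * r * b, ?_⟩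
    push_cast
    field_simp
    linear_combination (m ^ 2 * a : ℂ) * hc'
  have him : 0 < (b / a + u : ℂ).im := by
    have : (b / a : ℂ) = ((b / a : ℝ) : ℂ) := by push_cast; rfl
    rwa [add_im, this, ofReal_im, zero_add]
  have hsum : Summable fun n : ℤ => cexp (π * I * n ^ 2 * (b / a + u)) := by
    simpa [jacobiTheta₂_term] using (summable_jacobiTheta₂_term_iff 0 _).2 him
  rw [jacobiTheta, tsum_int_eq_sum_range_tsum hsum a]
  simp_rw [hterm, tsum_mul_left]

lemma tendsto_cpow_half_mul_jacobiTheta_div_add {a : ℕ} [NeZero a] {b : ℤ} (hab : Even (a * b)) :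
    Tendsto (fun u : ℂ => (-I * u) ^ (1 / 2 : ℂ) * jacobiTheta (b / a + u))
      horodiscNhdsZero (𝓝 (quadGaussSum b a / a)) := by
  have hsum := tendsto_finsetSum (Finset.range a) fun r _ =>
    (tendsto_cpow_half_mul_tsum_exp_arithProgression a r).const_mul
      (cexp (π * I * r ^ 2 * (b / a)))
  rw [← Finset.sum_mul, mul_one_div] at hsum
  refine hsum.congr' ?_
  filter_upwards [tendsto_comap.eventually_gt_atTop 0] with u hu
  rw [jacobiTheta_div_add hab (im_neg_one_div_pos.1 hu), Finset.mul_sum]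
  exact Finset.sum_congr rfl fun r _ => mul_left_comm _ _ _

lemma tendsto_I_mul_horodiscNhdsZero :
    Tendsto (fun t : ℝ => I * t) (𝓝[>] 0) horodiscNhdsZero := by
  refine tendsto_comap_iff.2 (tendsto_inv_nhdsGT_zero.congr fun t => ?_)
  have : -1 / (I * t) = ((t⁻¹ : ℝ) : ℂ) * I := by
    rw [neg_div, one_div, mul_inv, inv_I, ofReal_inv]
    ring
  simp [this]

lemma neg_one_div_add_I_mul_add_one_div {x : ℝ} (hx : x ≠ 0) (t : ℝ) :
    -1 / (x + I * t) + 1 / x = I * t * (x * (x + I * t) : ℂ)⁻¹ := by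
  have hx' : (x : ℂ) ≠ 0 := ofReal_ne_zero.2 hx
  have hτ : (x + I * t : ℂ) ≠ 0 := fun h => hx (by simpa using congrArg re h)
  field_simp
  ring

lemma tendsto_neg_one_div_add_I_mul_add_one_div {x : ℝ} (hx : x ≠ 0) :
    Tendsto (fun t : ℝ => -1 / (x + I * t : ℂ) + 1 / x) (𝓝[>] 0) horodiscNhdsZero := by
  have hx2 : 0 < x ^ 2 := by positivity
  refine tendsto_comap_iff.2 ((tendsto_inv_nhdsGT_zero.const_mul_atTop hx2).congr' ?_)
  filter_upwards [self_mem_nhdsWithin] with t (ht : 0 < t)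
  have ht' : (t : ℂ) ≠ 0 := ofReal_ne_zero.2 ht.ne'
  have hdiv : -1 / (I * t * (x * (x + I * t) : ℂ)⁻¹) = ((x ^ 2 * t⁻¹ : ℝ) : ℂ) * I - x := by
    rw [← div_eq_mul_inv, div_div_eq_mul_div]
    push_cast
    field_simp
    linear_combination (-x ^ 2 : ℂ) * I_sq
  rw [Function.comp_apply, neg_one_div_add_I_mul_add_one_div hx, hdiv, sub_im, im_ofReal_mul, I_im,
    ofReal_im, mul_one, sub_zero]

lemma cpow_half_mul_jacobiTheta_neg_one_div_add {x t : ℝ} (hx : x ≠ 0) (ht : 0 < t) :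
    (-I * (-1 / (x + I * t) + 1 / x)) ^ (1 / 2 : ℂ) *
        jacobiTheta (-1 / x + (-1 / (x + I * t) + 1 / x)) =
      ((x * (x + I * t) : ℂ)⁻¹ ^ (1 / 2 : ℂ) * (-I * (x + I * t)) ^ (1 / 2 : ℂ)) *
        ((-I * (I * t)) ^ (1 / 2 : ℂ) * jacobiTheta (x + I * t)) := by
  have hτ : (x + I * t : ℂ) ≠ 0 := fun h => hx (by simpa using congrArg re h)
  have hI : -I * (I * t) = t := by linear_combination (-t : ℂ) * I_sq
  have hcpow : (-I * (-1 / (x + I * t) + 1 / x)) ^ (1 / 2 : ℂ) =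
      (t : ℂ) ^ (1 / 2 : ℂ) * (x * (x + I * t) : ℂ)⁻¹ ^ (1 / 2 : ℂ) := by
    rw [neg_one_div_add_I_mul_add_one_div hx, ← mul_assoc, hI, ofReal_mul_cpow ht.le]
  have harg : -1 / x + (-1 / (x + I * t) + 1 / x) = -1 / (x + I * t : ℂ) := by ring
  rw [hcpow, harg, hI, ← cpow_half_mul_jacobiTheta hτ]
  ring

lemma cpow_half_mul_eq_of_tendsto_jacobiTheta {x : ℝ} (hx : 0 < x) {L M : ℂ}
    (hL : Tendsto (fun u : ℂ => (-I * u) ^ (1 / 2 : ℂ) * jacobiTheta (x + u))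
      horodiscNhdsZero (𝓝 L))
    (hM : Tendsto (fun u : ℂ => (-I * u) ^ (1 / 2 : ℂ) * jacobiTheta (-1 / x + u))
      horodiscNhdsZero (𝓝 M)) :
    (-I * x) ^ (1 / 2 : ℂ) * L = x * M := by
  -- Put `τ = x + it` and let `t → 0⁺`: then `-1/τ = -1/x + v` with `v → 0` inside horodiscs.
  have hx' : (x : ℂ) ≠ 0 := ofReal_ne_zero.2 hx.ne'
  have hτ : Tendsto (fun t : ℝ => (x + I * t : ℂ)) (𝓝[>] 0) (𝓝 x) := by
    have hcont : Continuous fun t : ℝ => (x + I * t : ℂ) := by fun_prop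
    simpa using (hcont.tendsto 0).mono_left nhdsWithin_le_nhds
  have hsqrt : ((x : ℂ) * x)⁻¹ ^ (1 / 2 : ℂ) = (x : ℂ)⁻¹ := by
    rw [← sq, ← inv_pow, one_div, sq_cpow_two_inv]
    rwa [← ofReal_inv, ofReal_re, inv_pos]
  have hinv : Tendsto (fun t : ℝ => (x * (x + I * t) : ℂ)⁻¹ ^ (1 / 2 : ℂ)) (𝓝[>] 0)
      (𝓝 (x : ℂ)⁻¹) := by
    have hslit : ((x : ℂ) * x)⁻¹ ∈ slitPlane := by
      rw [← ofReal_mul, ← ofReal_inv, ofReal_mem_slitPlane]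
      positivity
    have h := ((hτ.const_mul (x : ℂ)).inv₀ (mul_ne_zero hx' hx')).cpow
      (tendsto_const_nhds (x := (1 / 2 : ℂ))) hslit
    rwa [hsqrt] at h
  have hroot : Tendsto (fun t : ℝ => (-I * (x + I * t)) ^ (1 / 2 : ℂ)) (𝓝[>] 0)
      (𝓝 ((-I * x) ^ (1 / 2 : ℂ))) :=
    (hτ.const_mul (-I)).cpow tendsto_const_nhds (.inr (by simpa using hx.ne'))
  have hlim := (hinv.mul hroot).mul (hL.comp tendsto_I_mul_horodiscNhdsZero)
  have hlim' := hM.comp (tendsto_neg_one_div_add_I_mul_add_one_div hx.ne')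
  have heq := tendsto_nhds_unique (hlim.congr' (by
    filter_upwards [self_mem_nhdsWithin] with t ht
    exact (cpow_half_mul_jacobiTheta_neg_one_div_add hx.ne' ht).symm)) hlim'
  rw [← heq]
  field_simp

theorem quadGaussSum_reciprocity {a b : ℕ} [NeZero a] [NeZero b] (hab : Even (a * b)) :
    (-I * (b / a)) ^ (1 / 2 : ℂ) * quadGaussSum b a = quadGaussSum (-a) b := by
  have ha : (a : ℂ) ≠ 0 := NeZero.ne _
  have hb : (b : ℂ) ≠ 0 := NeZero.ne _
  have hx : (0 : ℝ) < b / a := by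
    have := NeZero.pos a
    have := NeZero.pos b
    positivity
  have hL := tendsto_cpow_half_mul_jacobiTheta_div_add (a := a) (b := b) (mod_cast hab)
  have hM := tendsto_cpow_half_mul_jacobiTheta_div_add (a := b) (b := -a) (by
    rw [mul_neg, even_neg, mul_comm]
    exact_mod_cast hab)
  have hcusp : ((-a : ℤ) / b : ℂ) = -1 / ((b / a : ℝ) : ℂ) := by
    push_cast
    field_simp
  rw [hcusp] at hM
  have heq := cpow_half_mul_eq_of_tendsto_jacobiTheta hx (by simpa using hL) hM
  push_cast at heq
  field_simp at heq
  simpa [neg_mul, mul_div_assoc] using heq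

lemma quadGaussSum_neg_natCast_two (a : ℕ) : quadGaussSum (-a) 2 = 1 + (-I) ^ a := by
  have hexp : cexp (π * I * (-a / 2)) = (-I) ^ a := by
    rw [← exp_neg_pi_div_two_mul_I, ← exp_nat_mul]
    ring_nf
  simp [quadGaussSum, Finset.sum_range_succ, hexp]

lemma quadGaussSum_two (a : ℕ) [NeZero a] :
    (1 - I) * quadGaussSum 2 a = √a * (1 + (-I) ^ a) := by
  have ha : (0 : ℝ) < √a := Real.sqrt_pos.2 (mod_cast NeZero.pos a)
  have ha' : (√a : ℂ) ≠ 0 := ofReal_ne_zero.2 ha.ne'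
  have hsq : (√a : ℂ) ^ 2 = a := by
    rw [← ofReal_pow, Real.sq_sqrt (Nat.cast_nonneg a), ofReal_natCast]
  have hroot : (-I * (2 / a)) ^ (1 / 2 : ℂ) = (√a : ℂ)⁻¹ * (1 - I) := by
    have hbase : -I * (2 / a) = ((√a : ℂ)⁻¹ * (1 - I)) ^ 2 := by
      rw [mul_pow, inv_pow, hsq]
      linear_combination (-(a : ℂ)⁻¹) * I_sq
    rw [hbase, one_div, sq_cpow_two_inv]
    rw [← ofReal_inv, re_ofReal_mul]
    simpa using ha
  have hrec := quadGaussSum_reciprocity (a := a) (b := 2) (by simp)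
  rw [quadGaussSum_neg_natCast_two] at hrec
  push_cast at hrec
  rw [hroot] at hrec
  rw [← hrec]
  field_simp

lemma quadGaussSum_two_of_mod_four_eq_three {a : ℕ} (ha : a % 4 = 3) :
    quadGaussSum 2 a = I * √a := by
  have : NeZero a := ⟨by rintro rfl; simp at ha⟩
  have hpow : (-I) ^ a = I := by
    rw [← Nat.div_add_mod a 4, ha, pow_add, pow_mul, Even.neg_pow (by decide), I_pow_four,
      one_pow, one_mul, Odd.neg_pow (by decide), I_pow_three, neg_neg]
  have hne : (1 - I : ℂ) ≠ 0 := fun h => by simpa using congrArg re h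
  have h := quadGaussSum_two a
  rw [hpow] at h
  apply mul_left_cancel₀ hne
  linear_combination h + √a * I_sq

section QuadraticCharacter

variable {F R : Type*} [Field F] [Fintype F] [DecidableEq F] [CommRing R] [IsDomain R]

lemma sum_addChar_sq_eq_gaussSum (hF : ringChar F ≠ 2) {ψ : AddChar F R} (hψ : ψ ≠ 1) :
    ∑ x, ψ (x ^ 2) = gaussSum ((quadraticChar F).ringHomComp (Int.castRingHom R)) ψ := by
  have hfiber (y : F) : ∑ x with x ^ 2 = y, ψ (x ^ 2) = (quadraticChar F y + 1 : ℤ) * ψ y := by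
    rw [← quadraticChar_card_sqrts hF y, Finset.sum_congr rfl (g := fun _ => ψ y)]
    · simp
    · simp +contextual
  rw [← Finset.sum_fiberwise Finset.univ (fun x => x ^ 2)]
  simp_rw [hfiber]
  push_cast
  simp_rw [add_mul, one_mul, Finset.sum_add_distrib, AddChar.sum_eq_zero_of_ne_one hψ, add_zero]
  rfl

lemma sum_addChar_mul_sq (hF : ringChar F ≠ 2) {ψ : AddChar F R} (hψ : ψ ≠ 1) {c : F}
    (hc : c ≠ 0) : ∑ x, ψ (c * x ^ 2) = quadraticChar F c * ∑ x, ψ (x ^ 2) := by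
  have hshift : ψ.mulShift c ≠ 1 := AddChar.IsPrimitive.of_ne_one hψ hc
  have hsq : (quadraticChar F c : R) * quadraticChar F c = 1 := by
    rw [← sq]
    exact_mod_cast congrArg (Int.cast : ℤ → R) (quadraticChar_sq_one hc)
  have h := gaussSum_mulShift ((quadraticChar F).ringHomComp (Int.castRingHom R)) ψ
    (Units.mk0 c hc)
  calc
    _ = gaussSum ((quadraticChar F).ringHomComp (Int.castRingHom R)) (ψ.mulShift c) := by
      rw [← sum_addChar_sq_eq_gaussSum hF hshift]
      rfl
    _ = _ := by
      rw [sum_addChar_sq_eq_gaussSum hF hψ, ← h, ← mul_assoc]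
      simp only [MulChar.ringHomComp_apply, Units.val_mk0, eq_intCast, hsq, one_mul]

end QuadraticCharacter

lemma sum_range_natCast_zmod {M : Type*} [AddCommMonoid M] (N : ℕ) [NeZero N] (f : ZMod N → M) :
    ∑ j ∈ Finset.range N, f j = ∑ x, f x :=
  Finset.sum_bij' (fun j _ => (j : ZMod N)) (fun x _ => x.val) (by simp)
    (fun x _ => Finset.mem_range.2 x.val_lt)
    (fun j hj => ZMod.val_cast_of_lt (Finset.mem_range.1 hj)) (by simp) (by simp)

lemma quadGaussSum_two_mul_eq_sum_stdAddChar (k : ℤ) (N : ℕ) [NeZero N] :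
    quadGaussSum (2 * k) N = ∑ x : ZMod N, ZMod.stdAddChar ((k : ZMod N) * x ^ 2) := by
  rw [quadGaussSum,
    ← sum_range_natCast_zmod N fun x => ZMod.stdAddChar ((k : ZMod N) * x ^ 2)]
  refine Finset.sum_congr rfl fun j _ => ?_
  have h := ZMod.stdAddChar_coe (N := N) (k * j ^ 2)
  push_cast at h
  rw [h]
  push_cast
  ring_nf

lemma quadGaussSum_two_mul (p : ℕ) [Fact p.Prime] (hp : p ≠ 2) {k : ℤ} (hk : ¬ (p : ℤ) ∣ k) :
    quadGaussSum (2 * k) p = legendreSym p k * quadGaussSum 2 p := by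
  have hk' : (k : ZMod p) ≠ 0 := by rwa [Ne, ZMod.intCast_zmod_eq_zero_iff_dvd]
  have hψ : (ZMod.stdAddChar : AddChar (ZMod p) ℂ) ≠ 1 := by
    simpa using ZMod.isPrimitive_stdAddChar p one_ne_zero
  have hone := quadGaussSum_two_mul_eq_sum_stdAddChar 1 p
  rw [mul_one, Int.cast_one] at hone
  simp_rw [one_mul] at hone
  rw [quadGaussSum_two_mul_eq_sum_stdAddChar, hone,
    sum_addChar_mul_sq (by rwa [ZMod.ringChar_zmod_n]) hψ hk', legendreSym]

theorem gauss_sum_three_mod_four (p : ℕ) [Fact p.Prime] (h3 : p % 4 = 3)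
    (k : ℤ) (hk : ¬ (p : ℤ) ∣ k) :
    (∑ j ∈ Finset.range p,
        Complex.exp (2 * Real.pi * Complex.I * (j : ℂ) ^ 2 * (k : ℂ) / (p : ℂ)))
      = Complex.I * (legendreSym p k : ℂ) * (Real.sqrt p : ℂ) := by
  have hp : p ≠ 2 := by rintro rfl; simp at h3
  calc
    _ = quadGaussSum (2 * k) p := by
      refine Finset.sum_congr rfl fun j _ => ?_
      push_cast
      ring_nf
    _ = legendreSym p k * quadGaussSum 2 p := quadGaussSum_two_mul p hp hk
    _ = _ := by
      rw [quadGaussSum_two_of_mod_four_eq_three h3]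
      ring
end

section
/- Let p be a prime with p ≡ 3 (mod 4). Let q_o(p) and q_e(p) be, respectively, the number of odd and even quadratic residues mod p in the set {1, 2, …, p-1}. Then T(p) = p · (q_o(p) − q_e(p)). -/
/-- `T p = √p ∑_{n=1}^{(p-1)/2} tan(π n² / p)`. -/
noncomputable def T (p : ℕ) : ℝ :=
  Real.sqrt p * ∑ n ∈ Finset.Icc 1 ((p - 1) / 2), Real.tan (Real.pi * (n : ℝ) ^ 2 / p)

/-- The number of odd quadratic residues mod `p` in `{1, 2, …, p-1}`. -/
def qo (p : ℕ) : ℕ :=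
  ((Finset.Icc 1 (p - 1)).filter
    (fun k => Odd k ∧ ∃ x ∈ Finset.range p, x * x % p = k % p)).card

/-- The number of even quadratic residues mod `p` in `{1, 2, …, p-1}`. -/
def qe (p : ℕ) : ℕ :=
  ((Finset.Icc 1 (p - 1)).filter
    (fun k => Even k ∧ ∃ x ∈ Finset.range p, x * x % p = k % p)).card

/-! Write `e(x) = exp (2 π i x)`. For odd `p` and an integer `a`,
`i tan (π a / p) = ∑_{0 < k < p} (-1)^(k+1) e(k a / p)`, a geometric sum. Put `a = n²`
and sum over `n`: since `2 ∑_{n ≤ p/2} e(k n² / p) = χ(k) G - 1` with `χ` the quadratic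
character and `G` its Gauss sum, the tangent sum times `i` equals `(qo p - qe p) G`. It remains
to know that `G = i √p` for `p ≡ 3 (mod 4)` and `G = √p` for `p ≡ 1 (mod 4)`; in the latter
case a real number equals an imaginary one, so the tangent sum and `qo p - qe p` both vanish.

The sign of `G` comes from Kronecker's argument. With `ζ = e(1 / p)` and `m = (p - 1) / 2`, the
product `Q = ∏_{k ≤ m} (ζ^k - ζ^(-k))` is `i^m √p`, and `Q² = G²`, so `G = ε Q` with `ε = ±1`. Lift
this to integer polynomials in `ζ`: the difference is divisible by the `p`-th cyclotomic polynomial,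
which is `(X - 1)^(p - 1)` modulo `p`. Comparing the coefficients of `(X - 1)^m` gives
`ε 2^m (m!)² = -1` modulo `p`, which determines `ε` because `2^m` is the Legendre symbol of `2` and
`(m!)² = (-1)^(m + 1)` by Wilson's theorem. -/

open Finset Polynomial Complex
open scoped Nat Real

section OddIntervals

@[to_additive sum_Ico_one_eq_sum_Icc_half]
theorem prod_Ico_one_eq_prod_Icc_half {M : Type*} [CommMonoid M] {n : ℕ} (hn : Odd n)
    (f : ℕ → M) : ∏ k ∈ Ico 1 n, f k = ∏ k ∈ Icc 1 (n / 2), f k * f (n - k) := by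
  have upper_half : ∏ k ∈ Ico 1 (n / 2 + 1), f (n - k) = ∏ k ∈ Ico (n / 2 + 1) n, f k :=
    prod_bij' (fun k _ ↦ n - k) (fun k _ ↦ n - k) (by grind) (by grind) (by grind) (by grind)
      (fun _ _ ↦ rfl)
  rw [prod_mul_distrib, ← Ico_add_one_right_eq_Icc, upper_half,
    prod_Ico_consecutive f (by lia) (by grind)]

theorem sum_zmod_eq_add_sum_Ico {n : ℕ} [NeZero n] {M : Type*} [AddCommMonoid M]
    (f : ZMod n → M) : ∑ x, f x = f 0 + ∑ k ∈ Ico 1 n, f k := by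
  have sum_range : ∑ x, f x = ∑ k ∈ range n, f k :=
    sum_bij' (fun x _ ↦ x.val) (fun k _ ↦ (k : ZMod n))
      (fun x _ ↦ mem_range.2 x.val_lt) (fun _ _ ↦ mem_univ _) (fun x _ ↦ x.natCast_zmod_val)
      (fun k hk ↦ ZMod.val_cast_of_lt (mem_range.1 hk)) (fun x _ ↦ by rw [ZMod.natCast_zmod_val])
  rw [sum_range, sum_range_eq_add_Ico _ (NeZero.pos n), Nat.cast_zero]

theorem sum_zmod_eq_add_two_nsmul_sum_Icc_half {n : ℕ} [NeZero n] (hn : Odd n) {M : Type*}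
    [AddCommMonoid M] {f : ZMod n → M} (hf : f.Even) :
    ∑ x, f x = f 0 + 2 • ∑ k ∈ Icc 1 (n / 2), f k := by
  rw [sum_zmod_eq_add_sum_Ico, sum_Ico_one_eq_sum_Icc_half hn, ← sum_nsmul]
  congr 1
  refine sum_congr rfl fun k hk ↦ ?_
  have hkn : k ≤ n := by grind
  rw [Nat.cast_sub hkn, ZMod.natCast_self, zero_sub, hf, two_nsmul]

theorem sum_Ico_one_neg_one_pow_succ {R : Type*} [Ring R] {n : ℕ} (hn : Odd n) :
    ∑ k ∈ Ico 1 n, (-1 : R) ^ (k + 1) = 0 := by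
  have h := sum_range_eq_add_Ico (fun k ↦ (-1 : R) ^ k) hn.pos
  rw [neg_one_geom_sum, if_neg (Nat.not_even_iff_odd.2 hn), pow_zero, left_eq_add] at h
  simp only [pow_succ, ← sum_mul, h, zero_mul]

end OddIntervals

section FiniteField

variable {K : Type*} [Field K] [Fintype K]

theorem sum_pow_card_sub_one : ∑ x : K, x ^ (Fintype.card K - 1) = -1 := by
  classical
  have hq : Fintype.card K - 1 ≠ 0 := (Nat.sub_pos_of_lt Fintype.one_lt_card).ne'
  have h (x : K) : x ^ (Fintype.card K - 1) = 1 - if x = 0 then 1 else 0 := by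
    split_ifs with hx
    · rw [hx, zero_pow hq, sub_self]
    · rw [FiniteField.pow_card_sub_one_eq_one x hx, sub_zero]
  simp [h]

theorem sum_eval_eq_neg_coeff {f : K[X]} (hf : f.natDegree ≤ Fintype.card K - 1) :
    ∑ x, f.eval x = -f.coeff (Fintype.card K - 1) := by
  simp only [eval_eq_sum_range' (Nat.lt_succ_of_le hf)]
  rw [sum_comm]
  simp only [← mul_sum]
  rw [sum_range_succ, sum_pow_card_sub_one, mul_neg_one, add_eq_right]
  refine sum_eq_zero fun i hi ↦ ?_
  rw [FiniteField.sum_pow_lt_card_sub_one K i (mem_range.1 hi), mul_zero]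

end FiniteField

section HalfDiffProd

/-- The product `∏ (x ^ k - x ^ (n - k))` over `1 ≤ k ≤ n / 2`. At an `n`-th root of unity
`x = exp (i θ)` its factors are `x ^ k - x ^ (-k) = 2 i sin (k θ)`; writing `x ^ (n - k)` for
`x ^ (-k)` makes it a polynomial in `x`. -/
def halfDiffProd {R : Type*} [CommRing R] (n : ℕ) (x : R) : R :=
  ∏ k ∈ Icc 1 (n / 2), (x ^ k - x ^ (n - k))

theorem map_halfDiffProd {R S F : Type*} [CommRing R] [CommRing S] [FunLike F R S]
    [RingHomClass F R S] (f : F) (n : ℕ) (x : R) :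
    f (halfDiffProd n x) = halfDiffProd n (f x) := by
  simp only [halfDiffProd, map_prod, map_sub, map_pow]

theorem halfDiffProd_sq_of_isPrimitiveRoot {R : Type*} [CommRing R] [IsDomain R] {n : ℕ}
    (hn : Odd n) {ζ : R} (hζ : IsPrimitiveRoot ζ n) :
    halfDiffProd n ζ ^ 2 = (-1) ^ (n / 2) * n := by
  have hζ2 : IsPrimitiveRoot (ζ ^ 2) n := hζ.pow_of_coprime 2 hn.coprime_two_left
  have prod_eq : ∏ k ∈ Ico 1 n, (1 - (ζ ^ 2) ^ k) = (n : R) := by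
    obtain ⟨m, rfl⟩ := hn
    rw [prod_Ico_eq_prod_range]
    simpa [add_comm] using hζ2.prod_one_sub_pow_eq_order
  have pair_eq (k : ℕ) (hk : k ∈ Icc 1 (n / 2)) :
      (1 - (ζ ^ 2) ^ k) * (1 - (ζ ^ 2) ^ (n - k)) = -1 * (ζ ^ k - ζ ^ (n - k)) ^ 2 := by
    have inv : ζ ^ k * ζ ^ (n - k) = 1 := by
      rw [← pow_add, Nat.add_sub_cancel' (by grind), hζ.pow_eq_one]
    rw [pow_right_comm, pow_right_comm ζ 2]
    linear_combination (ζ ^ k * ζ ^ (n - k) - 1) * inv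
  rw [← prod_eq, prod_Ico_one_eq_prod_Icc_half hn, prod_congr rfl pair_eq, prod_mul_distrib,
    prod_const, Nat.card_Icc, Nat.add_sub_cancel, prod_pow, ← mul_assoc, ← mul_pow,
    neg_one_mul, neg_neg, one_pow, one_mul, halfDiffProd]

theorem exp_pow_sub_exp_pow {n k : ℕ} (hk : k ≤ n) (hn : n ≠ 0) :
    exp (2 * π * I / n) ^ k - exp (2 * π * I / n) ^ (n - k) =
      I * (2 * Real.sin (2 * π * k / n) : ℝ) := by
  have hpow : exp (2 * π * I / n) ^ k = exp (2 * π * k / n * I) := by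
    rw [← Complex.exp_nat_mul]
    ring_nf
  have hpow_sub : exp (2 * π * I / n) ^ (n - k) = exp (-(2 * π * k / n) * I) := by
    rw [pow_sub₀ _ (exp_ne_zero _) hk, (isPrimitiveRoot_exp n hn).pow_eq_one, one_mul, hpow,
      ← exp_neg, neg_mul]
  have hsin := two_sin (2 * π * k / n)
  push_cast
  rw [hpow, hpow_sub, hsin]
  linear_combination
    (exp (2 * π * k / n * I) - exp (-(2 * π * k / n) * I)) * I_mul_I

theorem halfDiffProd_exp {n : ℕ} (hn : Odd n) :
    halfDiffProd n (exp (2 * π * I / n)) = I ^ (n / 2) * √n := by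
  have hn0 : n ≠ 0 := hn.pos.ne'
  set S : ℝ := ∏ k ∈ Icc 1 (n / 2), 2 * Real.sin (2 * π * k / n) with hS
  have eq_mul : halfDiffProd n (exp (2 * π * I / n)) = I ^ (n / 2) * S := by
    rw [halfDiffProd, prod_congr rfl fun k hk ↦ exp_pow_sub_exp_pow (by grind) hn0,
      prod_mul_distrib, prod_const, Nat.card_Icc, Nat.add_sub_cancel, hS, ofReal_prod]
  have S_pos : 0 < S := by
    refine prod_pos fun k hk ↦ mul_pos two_pos (Real.sin_pos_of_pos_of_lt_pi ?_ ?_)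
    · have : 0 < k := by grind
      positivity
    · have : (2 * k : ℝ) < n := by exact_mod_cast (by grind : 2 * k < n)
      rw [div_lt_iff₀ (by positivity)]
      nlinarith [Real.pi_pos]
  have S_sq : S ^ 2 = n := by
    have h := halfDiffProd_sq_of_isPrimitiveRoot hn (isPrimitiveRoot_exp n hn0)
    rw [eq_mul, mul_pow, pow_right_comm, I_sq,
      mul_right_inj' (pow_ne_zero _ (neg_ne_zero.2 one_ne_zero))] at h
    exact_mod_cast h
  rw [eq_mul, ← S_sq, Real.sqrt_sq S_pos.le]

end HalfDiffProd

theorem coeff_card_prod_of_coeff_zero {R ι : Type*} [CommRing R] {s : Finset ι} {f : ι → R[X]}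
    (hf : ∀ i ∈ s, (f i).coeff 0 = 0) : (∏ i ∈ s, f i).coeff #s = ∏ i ∈ s, (f i).coeff 1 := by
  have factor (i : ι) (hi : i ∈ s) : f i = X * (f i).divX := by
    conv_lhs => rw [← X_mul_divX_add (f i), hf i hi, C_0, add_zero]
  rw [prod_congr rfl factor, prod_mul_distrib, prod_const, coeff_X_pow_mul', if_pos le_rfl,
    Nat.sub_self, coeff_zero_prod]
  exact prod_congr rfl fun i _ ↦ coeff_divX

theorem coeff_halfDiffProd_X_add_one (n : ℕ) :
    (halfDiffProd n (X + 1 : (ZMod n)[X])).coeff (n / 2) = 2 ^ (n / 2) * (n / 2)! := by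
  have coeff_prod := coeff_card_prod_of_coeff_zero (s := Icc 1 (n / 2))
    (f := fun k ↦ (X + 1 : (ZMod n)[X]) ^ k - (X + 1) ^ (n - k)) (by simp [coeff_X_add_one_pow])
  rw [Nat.card_Icc, Nat.add_sub_cancel] at coeff_prod
  rw [halfDiffProd, coeff_prod, ← prod_Ico_id_eq_factorial, Ico_add_one_right_eq_Icc, Nat.cast_prod]
  have coeff_factor (k : ℕ) (hk : k ∈ Icc 1 (n / 2)) :
      ((X + 1 : (ZMod n)[X]) ^ k - (X + 1) ^ (n - k)).coeff 1 = (2 * k : ZMod n) := by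
    have hkn : k ≤ n := by grind
    rw [coeff_sub, coeff_X_add_one_pow, coeff_X_add_one_pow, Nat.choose_one_right,
      Nat.choose_one_right, Nat.cast_sub hkn, ZMod.natCast_self]
    ring
  rw [prod_congr rfl coeff_factor, prod_mul_distrib, prod_const, Nat.card_Icc, Nat.add_sub_cancel]

section ModP

variable {p : ℕ} [Fact p.Prime]

theorem sub_one_pow_dvd_aeval {R : Type*} [CommRing R] [CharP R p] {K : Type*} [Field K]
    [CharZero K] {ζ : K} (hζ : IsPrimitiveRoot ζ p) {f : ℤ[X]} (hf : aeval ζ f = 0) (x : R) :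
    (x - 1) ^ (p - 1) ∣ aeval x f := by
  have hp : p.Prime := Fact.out
  have cyclotomic_dvd : cyclotomic p ℤ ∣ f := by
    rw [cyclotomic_eq_minpoly hζ hp.pos]
    exact minpoly.isIntegrallyClosed_dvd (hζ.isIntegral hp.pos) hf
  have aeval_cyclotomic : aeval x (cyclotomic p ℤ) = (x - 1) ^ (p - 1) := by
    have h := cyclotomic_mul_prime_eq_pow_of_not_dvd R hp.not_dvd_one
    rw [one_mul, cyclotomic_one] at h
    rw [aeval_def, eval₂_eq_eval_map, map_cyclotomic, h]
    simp
  exact aeval_cyclotomic ▸ map_dvd (aeval x) cyclotomic_dvd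

theorem sum_pow_half_mul_choose (hp : p ≠ 2) :
    (∑ x : ZMod p, x ^ (p / 2) * (x.val.choose (p / 2) : ZMod p)) * (p / 2)! = -1 := by
  have hodd : Odd p := (Fact.out : p.Prime).odd_of_ne_two hp
  set f : (ZMod p)[X] := X ^ (p / 2) * descPochhammer (ZMod p) (p / 2) with hf
  have f_monic : f.Monic := (monic_X_pow _).mul (monic_descPochhammer _ _)
  have f_natDegree : f.natDegree = Fintype.card (ZMod p) - 1 := by
    rw [hf, (monic_X_pow _).natDegree_mul (monic_descPochhammer _ _), natDegree_X_pow,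
      descPochhammer_natDegree, ZMod.card]
    grind
  have f_eval (x : ZMod p) :
      f.eval x = x ^ (p / 2) * (x.val.choose (p / 2) : ZMod p) * (p / 2)! := by
    conv_lhs => rw [← x.natCast_zmod_val]
    rw [hf, eval_mul, eval_pow, eval_X, descPochhammer_eval_eq_descFactorial,
      Nat.descFactorial_eq_factorial_mul_choose, x.natCast_zmod_val]
    push_cast
    ring
  rw [sum_mul, ← sum_congr rfl fun x _ ↦ f_eval x, sum_eval_eq_neg_coeff f_natDegree.le,
    ← f_natDegree, f_monic.coeff_natDegree]

theorem factorial_half_sq (hp : p ≠ 2) : ((p / 2)! : ZMod p) ^ 2 = (-1) ^ (p / 2 + 1) := by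
  have hodd : Odd p := (Fact.out : p.Prime).odd_of_ne_two hp
  have pair_eq (k : ℕ) (hk : k ∈ Icc 1 (p / 2)) :
      (k : ZMod p) * (p - k : ℕ) = -1 * (k : ZMod p) ^ 2 := by
    rw [Nat.cast_sub (by grind), ZMod.natCast_self]
    ring
  have wilson := ZMod.prod_Ico_one_prime p
  rw [prod_Ico_one_eq_prod_Icc_half hodd, prod_congr rfl pair_eq, prod_mul_distrib, prod_const,
    Nat.card_Icc, Nat.add_sub_cancel, prod_pow, ← Nat.cast_prod, ← Ico_add_one_right_eq_Icc,
    prod_Ico_id_eq_factorial] at wilson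
  have neg_one_pow_sq : ((-1 : ZMod p) ^ (p / 2)) ^ 2 = 1 := by
    rw [pow_right_comm, neg_one_sq, one_pow]
  linear_combination (-1) ^ (p / 2) * wilson - ((p / 2)! : ZMod p) ^ 2 * neg_one_pow_sq

end ModP

section QuadraticGaussSum

/-- The Gauss sum `∑ x, χ x * ψ x` of the quadratic character `χ` of a finite field, whose values
`0`, `1`, `-1` are read in the target ring of the additive character `ψ`. -/
def quadraticGaussSum {F R : Type*} [Field F] [Fintype F] [DecidableEq F] [CommRing R]
    (ψ : AddChar F R) : R :=
  gaussSum ((quadraticChar F).ringHomComp (Int.castRingHom R)) ψ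

variable {F R : Type*} [Field F] [Fintype F] [DecidableEq F] [CommRing R]

theorem quadraticGaussSum_eq_sum (ψ : AddChar F R) :
    quadraticGaussSum ψ = ∑ x, (quadraticChar F x : R) * ψ x :=
  rfl

theorem quadraticGaussSum_mulShift (ψ : AddChar F R) {k : F} (hk : k ≠ 0) :
    quadraticGaussSum (ψ.mulShift k) = quadraticChar F k * quadraticGaussSum ψ := by
  have shift := gaussSum_mulShift ((quadraticChar F).ringHomComp (Int.castRingHom R)) ψ
    (Units.mk0 k hk)
  have χ_mul_self : (quadraticChar F k : R) * quadraticChar F k = 1 := by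
    rw [← Int.cast_mul, ← sq, quadraticChar_sq_one hk, Int.cast_one]
  rw [MulChar.ringHomComp_apply, eq_intCast, Units.val_mk0] at shift
  rw [quadraticGaussSum, quadraticGaussSum, ← shift, ← mul_assoc, χ_mul_self, one_mul]

theorem quadraticGaussSum_eq_sum_sq [IsDomain R] (hF : ringChar F ≠ 2) {ψ : AddChar F R}
    (hψ : ψ ≠ 1) : quadraticGaussSum ψ = ∑ x, ψ (x ^ 2) := by
  have card_sqrts (a : F) : (#{x : F | x ^ 2 = a} : R) = quadraticChar F a + 1 := by
    have h := quadraticChar_card_sqrts hF a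
    rw [Set.toFinset_ofPred] at h
    exact_mod_cast congrArg (Int.cast : ℤ → R) h
  have sum_fiber (a : F) : ∑ x with x ^ 2 = a, ψ (x ^ 2) = quadraticChar F a * ψ a + ψ a := by
    rw [sum_congr rfl fun x hx ↦ by rw [(mem_filter.1 hx).2], sum_const, nsmul_eq_mul,
      card_sqrts, add_one_mul]
  rw [← sum_fiberwise univ (fun x : F ↦ x ^ 2), sum_congr rfl fun a _ ↦ sum_fiber a,
    sum_add_distrib, AddChar.sum_eq_zero_of_ne_one hψ, add_zero, quadraticGaussSum_eq_sum]

theorem quadraticGaussSum_sq [IsDomain R] [CharZero R] (hF : ringChar F ≠ 2) {ψ : AddChar F R}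
    (hψ : ψ.IsPrimitive) :
    quadraticGaussSum ψ ^ 2 = (-1) ^ (Fintype.card F / 2) * Fintype.card F := by
  have χ_ne_one : (quadraticChar F).ringHomComp (Int.castRingHom R) ≠ 1 :=
    (MulChar.ringHomComp_ne_one_iff (RingHom.injective_int _)).2 (quadraticChar_ne_one hF)
  rw [quadraticGaussSum, gaussSum_sq χ_ne_one ((quadraticChar_isQuadratic F).comp _) hψ,
    MulChar.ringHomComp_apply, quadraticChar_neg_one hF,
    ZMod.χ₄_eq_neg_one_pow (FiniteField.odd_card_of_char_ne_two hF)]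
  simp

end QuadraticGaussSum

section GaussSumSign

variable {p : ℕ} [Fact p.Prime]

/-- The quadratic Gauss sum of `ZMod p` as a polynomial in the `p`-th root of unity, with integer
coefficients so that it can be reduced modulo `p`. -/
noncomputable def gaussPolynomial (p : ℕ) [Fact p.Prime] : ℤ[X] :=
  ∑ x : ZMod p, C (quadraticChar (ZMod p) x) * X ^ x.val

theorem aeval_gaussPolynomial {R : Type*} [CommRing R] (a : R) :
    aeval a (gaussPolynomial p) = ∑ x : ZMod p, (quadraticChar (ZMod p) x : R) * a ^ x.val := by
  simp [gaussPolynomial]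

theorem coeff_sum_quadraticChar_mul_X_add_one_pow (hp : p ≠ 2) :
    (∑ x : ZMod p, (quadraticChar (ZMod p) x : (ZMod p)[X]) * (X + 1) ^ x.val).coeff (p / 2) =
      ∑ x : ZMod p, x ^ (p / 2) * (x.val.choose (p / 2) : ZMod p) := by
  have χ_eq_pow (x : ZMod p) : ((quadraticChar (ZMod p) x : ℤ) : ZMod p) = x ^ (p / 2) := by
    rw [quadraticChar_eq_pow_of_char_ne_two' ((ZMod.ringChar_zmod_n p).trans_ne hp), ZMod.card]
  simp only [finsetSum_coeff, ← C_eq_intCast, coeff_C_mul,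
    coeff_X_add_one_pow, χ_eq_pow]

theorem intCast_mul_two_pow_half_mul_factorial_half_sq (hp : p ≠ 2) {K : Type*} [Field K]
    [CharZero K] {ζ : K} (hζ : IsPrimitiveRoot ζ p) {ε : ℤ}
    (hε : aeval ζ (gaussPolynomial p) = ε * halfDiffProd p ζ) :
    (ε : ZMod p) * (2 ^ (p / 2) * (p / 2)! ^ 2) = -1 := by
  have two_le : 2 ≤ p := (Fact.out : p.Prime).two_le
  have aeval_eq_zero : aeval ζ (gaussPolynomial p - C ε * halfDiffProd p X) = 0 := by
    rw [map_sub, map_mul, aeval_C, map_halfDiffProd, aeval_X, hε, eq_intCast, sub_self]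
  have X_pow_dvd := sub_one_pow_dvd_aeval hζ aeval_eq_zero (X + 1 : (ZMod p)[X])
  rw [add_sub_cancel_right, map_sub, map_mul, aeval_C, map_halfDiffProd, aeval_X, eq_intCast,
    aeval_gaussPolynomial] at X_pow_dvd
  have coeff_eq := X_pow_dvd_iff.1 X_pow_dvd (p / 2) (by lia)
  rw [coeff_sub, sub_eq_zero, coeff_sum_quadraticChar_mul_X_add_one_pow hp, ← C_eq_intCast,
    coeff_C_mul, coeff_halfDiffProd_X_add_one] at coeff_eq
  rw [← sum_pow_half_mul_choose hp, coeff_eq]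
  ring

theorem χ₈_eq_one_or_neg_one {n : ℕ} (hn : Odd n) : ZMod.χ₈ n = 1 ∨ ZMod.χ₈ n = -1 := by
  rw [ZMod.χ₈_nat_eq_if_mod_eight, if_neg (by grind)]
  split_ifs <;> simp

theorem stdAddChar_natCast {n : ℕ} [NeZero n] (a : ℕ) :
    ZMod.stdAddChar (a : ZMod n) = exp (2 * π * I / n) ^ a := by
  rw [← Int.cast_natCast a, ZMod.stdAddChar_coe, ← Complex.exp_nat_mul, Int.cast_natCast]
  ring_nf

theorem quadraticGaussSum_stdAddChar_eq_aeval :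
    quadraticGaussSum (ZMod.stdAddChar (N := p)) =
      aeval (exp (2 * π * I / p)) (gaussPolynomial p) := by
  rw [aeval_gaussPolynomial]
  refine sum_congr rfl fun x _ ↦ congrArg _ ?_
  rw [← stdAddChar_natCast, x.natCast_zmod_val]

theorem quadraticGaussSum_stdAddChar_eq_χ₈_mul (hp : p ≠ 2) :
    quadraticGaussSum (ZMod.stdAddChar (N := p)) = ZMod.χ₈ p * (-I) ^ (p / 2) * √p := by
  have hodd : Odd p := (Fact.out : p.Prime).odd_of_ne_two hp
  have hchar : ringChar (ZMod p) ≠ 2 := (ZMod.ringChar_zmod_n p).trans_ne hp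
  have hζ : IsPrimitiveRoot (exp (2 * π * I / p)) p := isPrimitiveRoot_exp p hodd.pos.ne'
  have sq_eq_sq : quadraticGaussSum (ZMod.stdAddChar (N := p)) ^ 2 =
      halfDiffProd p (exp (2 * π * I / p)) ^ 2 := by
    rw [quadraticGaussSum_sq hchar (ZMod.isPrimitive_stdAddChar p), ZMod.card,
      halfDiffProd_sq_of_isPrimitiveRoot hodd hζ]
  obtain ⟨ε, ε_mem, gauss_eq⟩ : ∃ ε : ℤ, (ε = 1 ∨ ε = -1) ∧
      quadraticGaussSum (ZMod.stdAddChar (N := p)) =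
        ε * halfDiffProd p (exp (2 * π * I / p)) := by
    rcases sq_eq_sq_iff_eq_or_eq_neg.1 sq_eq_sq with h | h
    · exact ⟨1, .inl rfl, by simp [h]⟩
    · exact ⟨-1, .inr rfl, by simp [h]⟩
  have ε_eq : ε = ZMod.χ₈ p * (-1) ^ (p / 2) := by
    have congruence := intCast_mul_two_pow_half_mul_factorial_half_sq hp hζ
      (quadraticGaussSum_stdAddChar_eq_aeval.symm.trans gauss_eq)
    have two_pow : (2 : ZMod p) ^ (p / 2) = (ZMod.χ₈ p : ℤ) := by
      simpa [ZMod.card] using FiniteField.two_pow_card hchar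
    rw [two_pow, factorial_half_sq hp, pow_succ] at congruence
    have mul_eq_one : (ε : ZMod p) * (ZMod.χ₈ p * (-1) ^ (p / 2) : ℤ) = 1 := by
      push_cast
      linear_combination -congruence
    have sign : ZMod.χ₈ p * (-1) ^ (p / 2) = 1 ∨ ZMod.χ₈ p * (-1) ^ (p / 2) = -1 := by
      rcases χ₈_eq_one_or_neg_one hodd with h | h <;>
      rcases neg_one_pow_eq_or ℤ (p / 2) with h' | h' <;> simp [h, h']
    refine Int.cast_injOn_of_ringChar_ne_two hchar (.inr ε_mem) (.inr sign) ?_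
    rcases sign with h | h <;> rw [h] at mul_eq_one ⊢ <;> push_cast at mul_eq_one ⊢
    · linear_combination mul_eq_one
    · linear_combination -mul_eq_one
  rw [gauss_eq, halfDiffProd_exp hodd, ε_eq, neg_pow]
  push_cast
  ring

theorem quadraticGaussSum_stdAddChar (hp : p ≠ 2) :
    quadraticGaussSum (ZMod.stdAddChar (N := p)) = (if p % 4 = 1 then 1 else I) * √p := by
  have hodd : Odd p := (Fact.out : p.Prime).odd_of_ne_two hp
  rw [quadraticGaussSum_stdAddChar_eq_χ₈_mul hp]
  congr 1
  have pow_four : (-I) ^ 4 = 1 := by rw [Even.neg_pow (by decide), I_pow_four]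
  have half_eq : p / 2 = 4 * (p / 8) + p % 8 / 2 := by lia
  rw [ZMod.χ₈_nat_eq_if_mod_eight, half_eq, pow_add, pow_mul, pow_four, one_pow, one_mul]
  have hmod : p % 8 = 1 ∨ p % 8 = 3 ∨ p % 8 = 5 ∨ p % 8 = 7 := by grind
  rcases hmod with h | h | h | h <;>
    simp [h, show p % 2 ≠ 0 by lia, show p % 4 = p % 8 % 4 by lia, pow_succ]

end GaussSumSign

section Tangent

theorem I_mul_tan (θ : ℂ) : I * tan θ = (exp (2 * θ * I) - 1) / (exp (2 * θ * I) + 1) := by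
  have exp_mul_exp_neg : exp (θ * I) * exp (-θ * I) = 1 := by
    rw [← exp_add, neg_mul, add_neg_cancel, exp_zero]
  have exp_two : exp (2 * θ * I) = exp (θ * I) * exp (θ * I) := by
    rw [← exp_add]
    ring_nf
  have num : exp (2 * θ * I) - 1 = I * sin θ * (2 * exp (θ * I)) := by
    linear_combination exp_two + exp_mul_exp_neg - exp (θ * I) * I * two_sin θ
      - (exp (θ * I) * exp (-θ * I) - exp (θ * I) ^ 2) * I_mul_I
  have den : exp (2 * θ * I) + 1 = cos θ * (2 * exp (θ * I)) := by
    linear_combination exp_two - exp_mul_exp_neg - exp (θ * I) * two_cos θ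
  rw [num, den, mul_div_mul_right _ _ (by simp), tan_eq_sin_div_cos, mul_div_assoc]

theorem sum_Ico_one_neg_one_pow_mul_pow {K : Type*} [Field K] [NeZero (2 : K)] {n : ℕ}
    (hn : Odd n) {z : K} (hz : z ^ n = 1) :
    ∑ k ∈ Ico 1 n, (-1) ^ (k + 1) * z ^ k = (z - 1) / (z + 1) := by
  have z_add_one_ne_zero : z + 1 ≠ 0 := by
    intro h
    rw [eq_neg_of_add_eq_zero_left h, hn.neg_one_pow] at hz
    exact two_ne_zero (α := K) (by linear_combination -hz)
  have geom := geom_sum_mul (-z) n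
  rw [hn.neg_pow, hz, sum_range_eq_add_Ico _ hn.pos, pow_zero] at geom
  have sum_eq : ∑ k ∈ Ico 1 n, (-1) ^ (k + 1) * z ^ k = -∑ k ∈ Ico 1 n, (-z) ^ k := by
    rw [← sum_neg_distrib]
    exact sum_congr rfl fun k _ ↦ by rw [neg_pow z]; ring
  rw [eq_div_iff z_add_one_ne_zero, sum_eq]
  linear_combination geom

theorem I_mul_tan_pi_mul_div {n : ℕ} [NeZero n] (hn : Odd n) (a : ℕ) :
    I * (Real.tan (π * a / n) : ℝ) =
      ∑ k ∈ Ico 1 n, (-1) ^ (k + 1) * ZMod.stdAddChar (k * a : ZMod n) := by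
  have root : ZMod.stdAddChar (a : ZMod n) ^ n = 1 := by
    rw [← AddChar.map_nsmul_eq_pow, nsmul_eq_mul, ZMod.natCast_self, zero_mul,
      AddChar.map_zero_eq_one]
  have exp_eq : exp (2 * (π * a / n) * I) = ZMod.stdAddChar (a : ZMod n) := by
    rw [stdAddChar_natCast, ← Complex.exp_nat_mul]
    ring_nf
  push_cast
  rw [I_mul_tan, exp_eq, ← sum_Ico_one_neg_one_pow_mul_pow hn root]
  exact sum_congr rfl fun k _ ↦ by rw [← nsmul_eq_mul, AddChar.map_nsmul_eq_pow]

end Tangent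

section TangentSum

variable {p : ℕ} [Fact p.Prime]

theorem two_mul_sum_addChar_mul_sq {R : Type*} [CommRing R] [IsDomain R] (hp : p ≠ 2)
    {ψ : AddChar (ZMod p) R} (hψ : ψ.IsPrimitive) {k : ZMod p} (hk : k ≠ 0) :
    2 * ∑ n ∈ Icc 1 (p / 2), ψ (k * n ^ 2) =
      quadraticChar (ZMod p) k * quadraticGaussSum ψ - 1 := by
  have even : (fun x : ZMod p ↦ ψ (k * x ^ 2)).Even := fun x ↦ by simp only [neg_sq]
  rw [← quadraticGaussSum_mulShift ψ hk,
    quadraticGaussSum_eq_sum_sq ((ZMod.ringChar_zmod_n p).trans_ne hp) (hψ hk)]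
  simp only [AddChar.mulShift_apply]
  rw [sum_zmod_eq_add_two_nsmul_sum_Icc_half ((Fact.out : p.Prime).odd_of_ne_two hp) even,
    zero_pow two_ne_zero, mul_zero, AddChar.map_zero_eq_one, add_sub_cancel_left, nsmul_eq_mul,
    Nat.cast_two]

theorem natCast_zmod_ne_zero_of_mem_Ico {n k : ℕ} (hk : k ∈ Ico 1 n) : (k : ZMod n) ≠ 0 := by
  rw [Ne, ZMod.natCast_eq_zero_iff]
  obtain ⟨hk1, hkn⟩ := mem_Ico.1 hk
  exact Nat.not_dvd_of_pos_of_lt hk1 hkn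

theorem exists_mem_range_mul_self_mod_eq_iff {n : ℕ} [NeZero n] (k : ℕ) :
    (∃ x ∈ range n, x * x % n = k % n) ↔ IsSquare (k : ZMod n) := by
  simp only [← ZMod.natCast_eq_natCast_iff', Nat.cast_mul]
  constructor
  · rintro ⟨x, -, hx⟩
    exact ⟨x, hx.symm⟩
  · rintro ⟨y, hy⟩
    exact ⟨y.val, mem_range.2 y.val_lt, by rw [y.natCast_zmod_val, hy]⟩

theorem qo_sub_qe_eq_sum (n : ℕ) [NeZero n] :
    (qo n : ℤ) - qe n = ∑ k ∈ Ico 1 n with IsSquare ((k : ℕ) : ZMod n), (-1) ^ (k + 1) := by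
  have Icc_eq : Icc 1 (n - 1) = Ico 1 n := by
    have := NeZero.pos n
    grind
  have parity (k : ℕ) :
      ((if Odd k then 1 else 0) - (if Even k then 1 else 0) : ℤ) = (-1) ^ (k + 1) := by
    rcases k.even_or_odd with h | h
    · rw [if_neg (Nat.not_odd_iff_even.2 h), if_pos h, h.add_one.neg_one_pow, zero_sub]
    · rw [if_pos h, if_neg (Nat.not_even_iff_odd.2 h), h.add_one.neg_one_pow, sub_zero]
  simp only [qo, qe, Icc_eq, exists_mem_range_mul_self_mod_eq_iff, and_comm (b := IsSquare _),
    ← filter_filter, natCast_card_filter, ← sum_sub_distrib, parity]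

theorem sum_Ico_one_neg_one_pow_mul_quadraticChar (hp : p ≠ 2) :
    ∑ k ∈ Ico 1 p, (-1) ^ (k + 1) * quadraticChar (ZMod p) k = 2 * ((qo p : ℤ) - qe p) := by
  have χ_eq (k : ℕ) (hk : k ∈ Ico 1 p) :
      quadraticChar (ZMod p) k = (if IsSquare (k : ZMod p) then 2 else 0) - 1 := by
    split_ifs with h
    · rw [(quadraticChar_one_iff_isSquare (natCast_zmod_ne_zero_of_mem_Ico hk)).2 h]
      rfl
    · rw [quadraticChar_neg_one_iff_not_isSquare.2 h, zero_sub]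
  rw [sum_congr rfl fun k hk ↦ by rw [χ_eq k hk, mul_sub, mul_one], sum_sub_distrib,
    sum_Ico_one_neg_one_pow_succ ((Fact.out : p.Prime).odd_of_ne_two hp), sub_zero,
    qo_sub_qe_eq_sum, sum_filter, mul_sum]
  exact sum_congr rfl fun k _ ↦ by split_ifs <;> ring

theorem I_mul_sum_tan (hp : p ≠ 2) :
    I * (∑ n ∈ Icc 1 (p / 2), Real.tan (π * n ^ 2 / p) : ℝ) =
      (qo p - qe p) * quadraticGaussSum (ZMod.stdAddChar (N := p)) := by
  have hodd : Odd p := (Fact.out : p.Prime).odd_of_ne_two hp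
  set G := quadraticGaussSum (ZMod.stdAddChar (N := p))
  refine mul_left_cancel₀ (two_ne_zero (α := ℂ)) ?_
  calc 2 * (I * (∑ n ∈ Icc 1 (p / 2), Real.tan (π * n ^ 2 / p) : ℝ))
      = 2 * ∑ n ∈ Icc 1 (p / 2), ∑ k ∈ Ico 1 p,
          (-1) ^ (k + 1) * ZMod.stdAddChar (k * n ^ 2 : ZMod p) := by
        rw [ofReal_sum, mul_sum]
        exact_mod_cast congrArg (2 * ·) (sum_congr rfl fun n _ ↦ I_mul_tan_pi_mul_div hodd (n ^ 2))
    _ = ∑ k ∈ Ico 1 p, (-1) ^ (k + 1) *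
          (2 * ∑ n ∈ Icc 1 (p / 2), ZMod.stdAddChar (k * n ^ 2 : ZMod p)) := by
        rw [sum_comm, mul_sum]
        simp only [← mul_sum, mul_left_comm]
    _ = ∑ k ∈ Ico 1 p, (-1) ^ (k + 1) * (quadraticChar (ZMod p) k * G - 1) :=
        sum_congr rfl fun k hk ↦ by
          rw [two_mul_sum_addChar_mul_sq hp (ZMod.isPrimitive_stdAddChar p)
            (natCast_zmod_ne_zero_of_mem_Ico hk)]
    _ = (∑ k ∈ Ico 1 p, (-1) ^ (k + 1) * quadraticChar (ZMod p) k : ℤ) * G := by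
        simp only [mul_sub, sum_sub_distrib, mul_one, sum_Ico_one_neg_one_pow_succ hodd, sub_zero]
        push_cast
        rw [sum_mul]
        simp only [mul_assoc]
    _ = 2 * ((qo p - qe p) * G) := by
        rw [sum_Ico_one_neg_one_pow_mul_quadraticChar hp]
        push_cast
        ring

end TangentSum

theorem T_eq_p_mul_qo_sub_qe_general (p : ℕ) (hp : p.Prime) (hp2 : p ≠ 2) :
    T p = (p : ℝ) * ((qo p : ℝ) - (qe p : ℝ)) := by
  have : Fact p.Prime := ⟨hp⟩
  have half_eq : (p - 1) / 2 = p / 2 := by have := hp.odd_of_ne_two hp2; grind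
  have sqrt_pos : 0 < √(p : ℝ) := Real.sqrt_pos.2 (mod_cast hp.pos)
  have key := I_mul_sum_tan hp2
  rw [quadraticGaussSum_stdAddChar hp2, ← half_eq] at key
  rw [T]
  set S : ℝ := ∑ n ∈ Icc 1 ((p - 1) / 2), Real.tan (π * n ^ 2 / p)
  split_ifs at key
  · have S_eq_zero : S = 0 := by simpa using congrArg Complex.im key
    have qo_eq_qe : (qo p : ℝ) - qe p = 0 := by
      simpa [sqrt_pos.ne'] using (congrArg Complex.re key).symm
    rw [S_eq_zero, qo_eq_qe, mul_zero, mul_zero]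
  · have S_eq : S = (qo p - qe p) * √p := by simpa using congrArg Complex.im key
    rw [S_eq, mul_left_comm, Real.mul_self_sqrt p.cast_nonneg, mul_comm]

theorem T_eq_p_mul_qo_sub_qe (p : ℕ) (hp : p.Prime) (h3 : p % 4 = 3) :
    T p = (p : ℝ) * ((qo p : ℝ) - (qe p : ℝ)) :=
  T_eq_p_mul_qo_sub_qe_general p hp (by rintro rfl; contradiction)
end

section
/- Let p be a prime with p ≡ 3 (mod 4). Then T(p) = √p · Σ_{n=1}^{(p-1)/2} tan(π n²/p) is an odd integer, divisible by p but not by p². -/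
/-!
Since `i tan(π a / p) = (w - 1) / (w + 1)` with `w = exp(2π i a / p)` and `w ^ p = 1`, the geometric
series gives the finite Fourier expansion `i tan(π a / p) = 1 - ∑_{k < p} (-w) ^ k`. As `tan` is odd
and `a` has `1 + χ(a)` square roots mod `p`, where `χ` is the Legendre symbol, the sum of
`i tan(π n² / p)` over all residues `n` is `∑ₐ χ(a) i tan(π a / p) = -g ∑_{k < p} (-1) ^ k χ(k)`,
where `g` is the Gauss sum of `χ`. For `p ≡ 3 (mod 4)` the character `χ` is odd, so `g² = -p` and
both ends are twice the corresponding sums over the first `(p - 1) / 2` residues; hence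
`T(p)² = p² C²` with `C = ∑_{1 ≤ k ≤ (p-1)/2} (-1) ^ k χ(k)`. This `C` has an odd number of terms
`±1`, hence is odd, so nonzero, and smaller than `p` in absolute value.
-/

open Finset

theorem odd_sum_iff_odd_card {ι : Type*} {s : Finset ι} {f : ι → ℤ} (hf : ∀ i ∈ s, Odd (f i)) :
    Odd (∑ i ∈ s, f i) ↔ Odd #s := by
  rw [← ZMod.intCast_eq_one_iff_odd, ← ZMod.natCast_eq_one_iff_odd, Int.cast_sum,
    sum_congr rfl fun i hi => (hf i hi).intCast_zmod_two, sum_const, nsmul_one]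

theorem sum_univ_zmod_eq_sum_range {M : Type*} [AddCommMonoid M] (n : ℕ) [NeZero n]
    (f : ZMod n → M) : ∑ x, f x = ∑ k ∈ range n, f k :=
  sum_nbij' ZMod.val (fun k => (k : ZMod n)) (by simp [ZMod.val_lt]) (by simp) (by simp)
    (fun k hk => ZMod.val_cast_of_lt (mem_range.mp hk)) (by simp)

theorem sum_univ_zmod_of_even {M : Type*} [AddCommMonoid M] {n : ℕ} [NeZero n] (hn : Odd n)
    {f : ZMod n → M} (hf : f.Even) :
    ∑ x, f x = f 0 + 2 • ∑ k ∈ Icc 1 ((n - 1) / 2), f k := by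
  obtain ⟨m, rfl⟩ := hn
  have lower : ∑ k ∈ Ico 1 (m + 1), f k = ∑ k ∈ Icc 1 ((2 * m + 1 - 1) / 2), f k :=
    sum_congr (by ext; simp only [mem_Ico, mem_Icc]; omega) fun _ _ => rfl
  have upper : ∑ k ∈ Ico (m + 1) (2 * m + 1), f k = ∑ k ∈ Ico 1 (m + 1), f k := by
    refine sum_nbij' (2 * m + 1 - ·) (2 * m + 1 - ·) ?_ ?_ ?_ ?_ fun k hk => ?_
    any_goals intro k; simp only [mem_Ico]; omega
    rw [Nat.cast_sub (mem_Ico.mp hk).2.le, ZMod.natCast_self, zero_sub, hf]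
  rw [sum_univ_zmod_eq_sum_range, sum_range_eq_add_Ico _ (by omega), Nat.cast_zero,
    ← sum_Ico_consecutive _ (by omega : 1 ≤ m + 1) (by omega), upper, lower, two_nsmul]

theorem sum_comp_sq {F M : Type*} [Field F] [Fintype F] [DecidableEq F] [AddCommGroup M]
    (hF : ringChar F ≠ 2) (f : F → M) :
    ∑ x, f (x ^ 2) = ∑ a, (quadraticChar F a + 1) • f a := by
  rw [← sum_fiberwise univ (fun x : F => x ^ 2)]
  refine sum_congr rfl fun a _ => ?_
  have hcard : (#{x : F | x ^ 2 = a} : ℤ) = quadraticChar F a + 1 := by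
    rw [← quadraticChar_card_sqrts hF a, Set.toFinset_ofPred]
  rw [sum_congr rfl fun x hx => congrArg f (mem_filter.mp hx).2, sum_const, ← hcard,
    natCast_zsmul]

theorem sum_comp_sq_of_odd {F M : Type*} [Field F] [Fintype F] [DecidableEq F] [AddCommGroup M]
    [IsAddTorsionFree M] (hF : ringChar F ≠ 2) {f : F → M} (hf : f.Odd) :
    ∑ x, f (x ^ 2) = ∑ a, quadraticChar F a • f a := by
  simp only [sum_comp_sq hF, add_smul, one_smul, sum_add_distrib, hf.sum_eq_zero, add_zero]

-- Where `cos z = 0`, both sides are `0` since `x / 0 = 0`.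
theorem I_mul_tan_eq_exp_ratio (z : ℂ) :
    Complex.I * Complex.tan z =
      (Complex.exp (2 * Complex.I * z) - 1) / (Complex.exp (2 * Complex.I * z) + 1) := by
  rw [← Complex.cot_inv_eq_tan, Complex.cot_eq_exp_ratio, inv_div, ← mul_div_assoc, ← mul_assoc,
    Complex.I_mul_I, neg_one_mul, neg_sub]

theorem sub_one_div_add_one_eq_one_sub_geom_sum {K : Type*} [Field K] {n : ℕ} (hn : Odd n) {w : K}
    (hw : w ^ n = 1) (hw' : w + 1 ≠ 0) :
    (w - 1) / (w + 1) = 1 - ∑ k ∈ range n, (-w) ^ k := by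
  have hgeom := mul_neg_geom_sum (-w) n
  rw [hn.neg_pow, hw] at hgeom
  rw [div_eq_iff hw']
  linear_combination hgeom

section TangentOfResidues

variable {n : ℕ} [NeZero n]

variable (n) in
/-- The function `a ↦ i tan(π a / n)` on residues modulo `n`, written as `(w - 1) / (w + 1)` with
`w = exp(2π i a / n)` so that it is visibly well defined on `ZMod n`. -/
noncomputable def iTan (a : ZMod n) : ℂ :=
  (ZMod.stdAddChar a - 1) / (ZMod.stdAddChar a + 1)

theorem iTan_natCast (k : ℕ) : iTan n k = Complex.I * Real.tan (Real.pi * k / n) := by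
  have hexp : ZMod.stdAddChar (k : ZMod n) =
      Complex.exp (2 * Complex.I * (Real.pi * k / n : ℝ)) := by
    rw [← Int.cast_natCast k, ZMod.stdAddChar_coe]
    push_cast
    ring_nf
  rw [iTan, hexp, Complex.ofReal_tan, I_mul_tan_eq_exp_ratio]

theorem iTan_odd : (iTan n).Odd := by
  intro a
  have hw : ZMod.stdAddChar a ≠ 0 := (ZMod.stdAddChar.val_isUnit a).ne_zero
  rw [iTan, iTan, AddChar.map_neg_eq_inv, ← mul_div_mul_left _ _ hw, mul_sub, mul_add,
    mul_inv_cancel₀ hw, mul_one, ← neg_div, neg_sub, add_comm 1]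

theorem iTan_eq_one_sub_sum (hn : Odd n) (a : ZMod n) :
    iTan n a = 1 - ∑ k : ZMod n, (-1) ^ k.val * ZMod.stdAddChar (k * a) := by
  have hw : ZMod.stdAddChar a ^ n = 1 := by
    rw [← AddChar.map_nsmul_eq_pow, nsmul_eq_mul, ZMod.natCast_self, zero_mul,
      AddChar.map_zero_eq_one]
  have hw' : ZMod.stdAddChar a + 1 ≠ 0 := fun h => by
    rw [eq_neg_of_add_eq_zero_left h, hn.neg_one_pow] at hw
    norm_num at hw
  rw [iTan, sub_one_div_add_one_eq_one_sub_geom_sum hn hw hw', sum_univ_zmod_eq_sum_range]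
  congr 1
  refine sum_congr rfl fun k hk => ?_
  rw [ZMod.val_cast_of_lt (mem_range.mp hk), ← nsmul_eq_mul, AddChar.map_nsmul_eq_pow, ← neg_pow]

theorem sum_mul_iTan (hn : Odd n) {χ : DirichletCharacter ℂ n} (hχ : χ.IsPrimitive)
    (hχ₁ : χ ≠ 1) :
    ∑ a, χ a * iTan n a = -(gaussSum χ ZMod.stdAddChar * ∑ k : ZMod n, (-1) ^ k.val * χ⁻¹ k) :=
  calc ∑ a, χ a * iTan n a
    _ = ∑ a, χ a - ∑ a, ∑ k : ZMod n, (-1) ^ k.val * (χ a * ZMod.stdAddChar (k * a)) := by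
      simp only [iTan_eq_one_sub_sum hn, mul_sub, mul_one, sum_sub_distrib, mul_sum,
        mul_left_comm (χ _)]
    _ = -∑ k : ZMod n, (-1) ^ k.val * gaussSum χ (AddChar.mulShift ZMod.stdAddChar k) := by
      rw [MulChar.sum_eq_zero_of_ne_one hχ₁, zero_sub, sum_comm]
      simp only [gaussSum, AddChar.mulShift_apply, mul_sum]
    _ = _ := by
      simp only [gaussSum_mulShift_of_isPrimitive _ hχ, mul_sum]
      congr! 2 with k
      ring

theorem neg_one_pow_val_neg {R : Type*} [Ring R] (hn : Odd n) {a : ZMod n} (ha : a ≠ 0) :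
    (-1 : R) ^ (-a).val = -(-1) ^ a.val := by
  have hparity : Even (n - a.val) ↔ ¬Even a.val := by
    simp only [Nat.even_sub a.val_le, Nat.not_even_iff_odd.mpr hn, false_iff]
  rw [ZMod.neg_val, if_neg ha, neg_one_pow_eq_ite, neg_one_pow_eq_ite]
  by_cases h : Even a.val <;> simp only [hparity, h, not_true, not_false_iff, if_true, if_false,
    neg_neg]

theorem even_neg_one_pow_val_mul {R : Type*} [CommRing R] (hn : Odd n) {χ : DirichletCharacter R n}
    (hχ : χ.Odd) : Function.Even fun k : ZMod n => (-1) ^ k.val * χ k := by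
  intro k
  rcases eq_or_ne k 0 with rfl | hk
  · rw [neg_zero]
  · simp only [neg_one_pow_val_neg hn hk, hχ.eval_neg, neg_mul_neg]

theorem sum_iTan_sq (hn : Odd n) :
    ∑ a : ZMod n, iTan n (a ^ 2) =
      2 * (Complex.I * ∑ k ∈ Icc 1 ((n - 1) / 2), Real.tan (Real.pi * (k : ℝ) ^ 2 / n)) := by
  have heven : Function.Even fun a : ZMod n => iTan n (a ^ 2) := fun a => by
    simp only [neg_sq]
  rw [sum_univ_zmod_of_even hn heven, zero_pow two_ne_zero, iTan_odd.map_zero, zero_add,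
    nsmul_eq_mul, Nat.cast_ofNat, Complex.ofReal_sum, mul_sum _ _ Complex.I]
  simp only [← Nat.cast_pow, iTan_natCast]

end TangentOfResidues

theorem isPrimitive_of_prime_of_ne_one {R : Type*} [CommMonoidWithZero R] {p : ℕ}
    [hp : Fact p.Prime] {χ : DirichletCharacter R p} (hχ : χ ≠ 1) : χ.IsPrimitive :=
  ((Nat.dvd_prime hp.out).mp χ.conductor_dvd_level).resolve_left fun h =>
    hχ (DirichletCharacter.eq_one_iff_conductor_eq_one.mpr h)

section LegendreSymbol

variable (p : ℕ) [hp : Fact p.Prime]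

/-- The Legendre symbol modulo `p` as a complex Dirichlet character. -/
noncomputable def legendreChar : DirichletCharacter ℂ p :=
  (quadraticChar (ZMod p)).ringHomComp (Int.castRingHom ℂ)

theorem legendreChar_apply (a : ZMod p) : legendreChar p a = quadraticChar (ZMod p) a := rfl

theorem legendreChar_isQuadratic : (legendreChar p).IsQuadratic :=
  (quadraticChar_isQuadratic (ZMod p)).comp _

/-- The half-range alternating sum `C = ∑_{k=1}^{(p-1)/2} (-1) ^ k (k / p)` of Legendre symbols; it
is the cofactor in `T p = ± p C` when `p ≡ 3 (mod 4)`. -/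
def altLegendreSum : ℤ := ∑ k ∈ Icc 1 ((p - 1) / 2), (-1) ^ k * legendreSym p k

variable {p}

theorem legendreChar_ne_one (hp2 : p ≠ 2) : legendreChar p ≠ 1 :=
  (MulChar.ringHomComp_ne_one_iff (RingHom.injective_int _)).mpr
    (quadraticChar_ne_one ((ZMod.ringChar_zmod_n p).substr hp2))

theorem sum_iTan_sq_eq_gaussSum_mul (hp2 : p ≠ 2) :
    ∑ a : ZMod p, iTan p (a ^ 2) =
      -(gaussSum (legendreChar p) ZMod.stdAddChar *
        ∑ k : ZMod p, (-1) ^ k.val * legendreChar p k) := by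
  have hne : legendreChar p ≠ 1 := legendreChar_ne_one hp2
  rw [sum_comp_sq_of_odd ((ZMod.ringChar_zmod_n p).substr hp2) iTan_odd]
  simp only [zsmul_eq_mul, ← legendreChar_apply]
  rw [sum_mul_iTan (hp.out.odd_of_ne_two hp2) (isPrimitive_of_prime_of_ne_one hne) hne,
    (legendreChar_isQuadratic p).inv]

theorem legendreChar_odd (h3 : p % 4 = 3) : (legendreChar p).Odd := by
  have hchar : ringChar (ZMod p) ≠ 2 := by rw [ZMod.ringChar_zmod_n]; omega
  rw [DirichletCharacter.Odd, legendreChar_apply, quadraticChar_neg_one hchar, ZMod.card,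
    ZMod.χ₄_nat_three_mod_four h3, Int.cast_neg, Int.cast_one]

theorem gaussSum_legendreChar_sq (h3 : p % 4 = 3) :
    gaussSum (legendreChar p) ZMod.stdAddChar ^ 2 = -p := by
  rw [gaussSum_sq (χ := legendreChar p) (legendreChar_ne_one (by omega))
    (legendreChar_isQuadratic p) (ZMod.isPrimitive_stdAddChar p), legendreChar_odd h3, ZMod.card,
    neg_one_mul]

theorem isUnit_neg_one_pow_mul_legendreSym {k : ℕ} (hk : k ∈ Icc 1 ((p - 1) / 2)) :
    IsUnit ((-1) ^ k * legendreSym p k) := by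
  have hk0 : ((k : ℤ) : ZMod p) ≠ 0 := by
    obtain ⟨hk1, hkp⟩ := mem_Icc.mp hk
    rw [Int.cast_natCast, Ne, ZMod.natCast_eq_zero_iff]
    exact Nat.not_dvd_of_pos_of_lt hk1 (by omega)
  exact (isUnit_neg_one.pow k).mul
    (Int.isUnit_iff.mpr (legendreSym.eq_one_or_neg_one p hk0))

theorem odd_altLegendreSum (h3 : p % 4 = 3) : Odd (altLegendreSum p) := by
  refine (odd_sum_iff_odd_card fun k hk => ?_).mpr ?_
  · rcases Int.isUnit_iff.mp (isUnit_neg_one_pow_mul_legendreSym hk) with h | h <;> rw [h] <;>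
      decide
  · rw [Nat.card_Icc, Nat.odd_iff]
    omega

variable (p) in
theorem abs_altLegendreSum_lt : |altLegendreSum p| < p :=
  calc |altLegendreSum p|
    _ ≤ ∑ k ∈ Icc 1 ((p - 1) / 2), |(-1) ^ k * legendreSym p k| := abs_sum_le_sum_abs _ _
    _ = ((p - 1) / 2 : ℕ) := by
      rw [sum_congr rfl fun k hk =>
        Int.isUnit_iff_abs_eq.mp (isUnit_neg_one_pow_mul_legendreSym hk), sum_const, Nat.card_Icc,
        nsmul_one, Nat.add_sub_cancel]
    _ < p := by have := hp.out.pos; omega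

theorem not_dvd_altLegendreSum (h3 : p % 4 = 3) : ¬(p : ℤ) ∣ altLegendreSum p := by
  intro hdvd
  have hodd := odd_altLegendreSum h3
  rw [Int.eq_zero_of_abs_lt_dvd hdvd (abs_altLegendreSum_lt p)] at hodd
  exact Int.not_odd_zero hodd

theorem sum_neg_one_pow_val_mul_legendreChar (h3 : p % 4 = 3) :
    ∑ k : ZMod p, (-1) ^ k.val * legendreChar p k = 2 * altLegendreSum p := by
  have hodd : Odd p := Nat.odd_iff.mpr (by omega)
  rw [sum_univ_zmod_of_even hodd (even_neg_one_pow_val_mul hodd (legendreChar_odd h3)),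
    MulChar.map_zero, mul_zero, zero_add, altLegendreSum, nsmul_eq_mul]
  push_cast
  congr 1
  refine sum_congr rfl fun k hk => ?_
  rw [ZMod.val_cast_of_lt (by have := hp.out.pos; rw [mem_Icc] at hk; omega), legendreChar_apply,
    legendreSym, Int.cast_natCast]

theorem sum_tan_sq_sq (h3 : p % 4 = 3) :
    (∑ n ∈ Icc 1 ((p - 1) / 2), Real.tan (Real.pi * (n : ℝ) ^ 2 / p)) ^ 2 =
      p * (altLegendreSum p : ℝ) ^ 2 := by
  set S : ℝ := ∑ n ∈ Icc 1 ((p - 1) / 2), Real.tan (Real.pi * (n : ℝ) ^ 2 / p) with hS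
  set g := gaussSum (legendreChar p) ZMod.stdAddChar
  have hI : Complex.I * S = -(g * altLegendreSum p) := by
    have h := sum_iTan_sq (n := p) (Nat.odd_iff.mpr (by omega))
    rw [sum_iTan_sq_eq_gaussSum_mul (by omega), sum_neg_one_pow_val_mul_legendreChar h3, ← hS] at h
    linear_combination -h / 2
  have hsq : (S : ℂ) ^ 2 = p * (altLegendreSum p : ℂ) ^ 2 := by
    calc (S : ℂ) ^ 2
      _ = -(Complex.I * S) ^ 2 := by rw [mul_pow, Complex.I_sq]; ring
      _ = -(g ^ 2 * altLegendreSum p ^ 2) := by rw [hI]; ring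
      _ = _ := by rw [gaussSum_legendreChar_sq h3]; ring
  exact_mod_cast hsq

theorem T_eq_or_eq_neg (h3 : p % 4 = 3) :
    T p = p * altLegendreSum p ∨ T p = -(p * altLegendreSum p) := by
  rw [← sq_eq_sq_iff_eq_or_eq_neg, T, mul_pow, Real.sq_sqrt p.cast_nonneg, sum_tan_sq_sq h3]
  ring

end LegendreSymbol

theorem T_odd_integer_div_p_not_p_sq (p : ℕ) (hp : p.Prime) (h3 : p % 4 = 3) :
    ∃ m : ℤ, T p = (m : ℝ) ∧ Odd m ∧ (p : ℤ) ∣ m ∧ ¬ ((p : ℤ) ^ 2 ∣ m) := by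
  have : Fact p.Prime := ⟨hp⟩
  set C := altLegendreSum p
  have hodd : Odd (p * C) := Odd.mul (Int.odd_iff.mpr (by omega)) (odd_altLegendreSum h3)
  have hsq : ¬(p : ℤ) ^ 2 ∣ p * C := by
    rw [sq, mul_dvd_mul_iff_left (Int.natCast_ne_zero.mpr hp.ne_zero)]
    exact not_dvd_altLegendreSum h3
  rcases T_eq_or_eq_neg h3 with hT | hT
  · exact ⟨p * C, by exact_mod_cast hT, hodd, dvd_mul_right _ _, hsq⟩
  · exact ⟨-(p * C), by exact_mod_cast hT, hodd.neg, (dvd_mul_right _ _).neg_right,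
      by rwa [dvd_neg]⟩
end
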